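/- Consider Bernoulli bond percolation on ℤ² in which each bond independently takes the value 0 ('open') with probability p and 1 ('closed') with probability 1−p. For any ε>0, there exists p₀=p₀(ε)∈(0,1/2) such that for all p∈[0,p₀] and all sufficiently large n (depending on ε): P_{ℤ²,p}^{bond}[ D(0,(n,0)) ≤ (1+ε)n ] ≥ 1−ε. -/

import Mathlib

/-!
Bernoulli bond percolation on `ℤ²` and chemical distance (Proposition on `D(0,n)`).
Since this Mathlib does not provide infinite product measures, the Bernoulli bond
product measures are characterised by the predicate `IsBernoulliBondFamily`
(finite-dimensional distributions), which determines them uniquely.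
-/

open MeasureTheory Filter Topology Set
open scoped ENNReal Classical

noncomputable section

namespace Z2BondPercolation

/-- Vertices of the square lattice `ℤ²`. -/
abbrev ZV := ℤ × ℤ

/-- Adjacency in `ℤ²`: Euclidean (equivalently `ℓ¹`) distance one. -/
def adjZ (a b : ZV) : Prop := (a.1 - b.1).natAbs + (a.2 - b.2).natAbs = 1

/-- Bonds of `ℤ²`, encoded as a vertex together with a direction:
`(a, true)` is the bond from `a` to `a + (1,0)`, and `(a, false)` the bond from `a` to
`a + (0,1)`. -/
abbrev Bond := ZV × Bool

/-- A bond configuration: `ω e = true` means the bond `e` is open (value 0), `ω e =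
false` means it is closed (value 1). -/
abbrev CfgZ := Bond → Bool

/-- The bond joining two adjacent vertices. -/
def bondOf (a b : ZV) : Bond :=
  if b = (a.1 + 1, a.2) then (a, true)
  else if b = (a.1 - 1, a.2) then (b, true)
  else if b = (a.1, a.2 + 1) then (a, false)
  else (b, false)

/-- `IsBernoulliBondFamily P` says that for each `p ∈ [0,1]`, `P p` is the Bernoulli
bond product probability measure under which bonds are independently open (value 0)
with probability `p` and closed (value 1) with probability `1 - p`.  This characterises
`P p` uniquely. -/
def IsBernoulliBondFamily (P : ℝ → Measure CfgZ) : Prop :=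
  ∀ p : ℝ, 0 ≤ p → p ≤ 1 →
    IsProbabilityMeasure (P p) ∧
    ∀ F : Finset Bond, ∀ b : Bond → Bool,
      P p {ω : CfgZ | ∀ e ∈ F, ω e = b e}
        = ∏ e ∈ F, ENNReal.ofReal (if b e then p else 1 - p)

/-- One step of a closed path. -/
def closedStep (ω : CfgZ) (a b : ZV) : Prop := adjZ a b ∧ ω (bondOf a b) = false

/-- The chemical distance `D(u,v)`: the minimal number of bonds of a closed lattice path
joining `u` to `v` (`∞` if there is none). -/
def chemDist (ω : CfgZ) (u v : ZV) : ℝ≥0∞ :=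
  ⨅ γ : {γ : List ZV // γ.Chain' (closedStep ω) ∧ γ.head? = some u ∧ γ.getLast? = some v},
    ((γ.1.length - 1 : ℕ) : ℝ≥0∞)

/-- King-move (or equal) relation. -/
def king (a b : ZV) : Prop := |a.1 - b.1| ≤ 1 ∧ |a.2 - b.2| ≤ 1

/-- A vertex is bad if one of its two outgoing bonds is open. -/
def bad (ω : CfgZ) (v : ZV) : Prop := ω (v, true) = true ∨ ω (v, false) = true

/-- King graph restricted to bad vertices. -/
def badGraph (ω : CfgZ) : SimpleGraph ZV where
  Adj a b := a ≠ b ∧ king a b ∧ bad ω a ∧ bad ω b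
  symm := ⟨fun a b h => ⟨h.1.symm, ⟨by rw [abs_sub_comm]; exact h.2.1.1,
    by rw [abs_sub_comm]; exact h.2.1.2⟩, h.2.2.2, h.2.2.1⟩⟩
  loopless := ⟨fun a h => h.1 rfl⟩

/-- Union of bad clusters meeting the segment. -/
def badSet (ω : CfgZ) (n : ℕ) : Set ZV :=
  {w | ∃ k : ℕ, k ≤ n ∧ bad ω ((k : ℤ), 0) ∧ (badGraph ω).Reachable ((k : ℤ), 0) w}

/-- The lattice graph restricted to a set. -/
def latGraph (S : Set ZV) : SimpleGraph ZV where
  Adj a b := adjZ a b ∧ a ∈ S ∧ b ∈ S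
  symm := ⟨fun a b h => ⟨by have := h.1; unfold adjZ at *; omega, h.2.2, h.2.1⟩⟩
  loopless := ⟨fun a h => by have := h.1; unfold adjZ at *; omega⟩

/-- The segment and the outer boundary of `B`, minus `B`. -/
def detour (B : Set ZV) (n : ℕ) : Set ZV :=
  {v | v ∉ B ∧ ((∃ k : ℕ, k ≤ n ∧ v = ((k : ℤ), 0)) ∨ ∃ b ∈ B, king b v)}

lemma detour_connected (B : Set ZV) (n : ℕ) (hB : B.Finite)
    (h0 : ∀ j : ℤ, ((0 : ℤ), j) ∉ B) (hn : ∀ j : ℤ, ((n : ℤ), j) ∉ B) :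
    (latGraph (detour B n)).Reachable ((0 : ℤ), 0) ((n : ℤ), 0) := by
  set S := detour B n with hS
  by_contra hcon
  let a : ZV → ℤ := fun v => if (latGraph S).Reachable ((0 : ℤ), 0) v then 1 else 0
  have ha : ∀ u v, adjZ u v → u ∈ S → v ∈ S → a u = a v := by
    intro u v huv hu hv
    have hadj : (latGraph S).Adj u v := ⟨huv, hu, hv⟩
    have : (latGraph S).Reachable ((0 : ℤ), 0) u ↔ (latGraph S).Reachable ((0 : ℤ), 0) v :=
      ⟨fun h => h.trans hadj.reachable, fun h => h.trans hadj.symm.reachable⟩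
    simp only [a, this]
  let psi : ZV → ZV → ℤ := fun u v => if u ∈ B ∨ v ∈ B then a v - a u else 0
  have hpsi0 : ∀ u v, u ∉ B → v ∉ B → psi u v = 0 := by
    intro u v hu hv; simp [psi, hu, hv]
  have hpsi1 : ∀ u v, adjZ u v → (u ∉ B → u ∈ S) → (v ∉ B → v ∈ S) → psi u v = a v - a u := by
    intro u v huv hu hv
    by_cases h : u ∈ B ∨ v ∈ B
    · simp [psi, h]
    · push Not at h
      rw [hpsi0 u v h.1 h.2, ha u v huv (hu h.1) (hv h.2)]; ring
  have hclosed : ∀ x y : ℤ, psi (x, y) (x+1, y) + psi (x+1, y) (x+1, y+1)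
      = psi (x, y) (x, y+1) + psi (x, y+1) (x+1, y+1) := by
    intro x y
    by_cases h : ∃ b ∈ B, (b = (x,y) ∨ b = (x+1,y) ∨ b = (x,y+1) ∨ b = (x+1,y+1))
    · obtain ⟨b, hb, hb'⟩ := h
      have key : ∀ s t : ℤ, (s = x ∨ s = x + 1) → (t = y ∨ t = y + 1) →
          (s, t) ∉ B → (s, t) ∈ S := by
        intro s t hs ht hnot
        refine ⟨hnot, Or.inr ⟨b, hb, ?_⟩⟩
        unfold king
        rw [abs_le, abs_le]
        rcases hb' with rfl | rfl | rfl | rfl <;> dsimp only <;> omega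
      rw [hpsi1 _ _ (by simp [adjZ]) (key _ _ (by simp) (by simp)) (key _ _ (by simp) (by simp)),
        hpsi1 _ _ (by simp [adjZ]) (key _ _ (by simp) (by simp)) (key _ _ (by simp) (by simp)),
        hpsi1 _ _ (by simp [adjZ]) (key _ _ (by simp) (by simp)) (key _ _ (by simp) (by simp)),
        hpsi1 _ _ (by simp [adjZ]) (key _ _ (by simp) (by simp)) (key _ _ (by simp) (by simp))]
      ring
    · push Not at h
      have h1 : (x,y) ∉ B := fun hb => (h _ hb).1 rfl
      have h2 : (x+1,y) ∉ B := fun hb => (h _ hb).2.1 rfl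
      have h3 : (x,y+1) ∉ B := fun hb => (h _ hb).2.2.1 rfl
      have h4 : (x+1,y+1) ∉ B := fun hb => (h _ hb).2.2.2 rfl
      rw [hpsi0 _ _ h1 h2, hpsi0 _ _ h2 h4, hpsi0 _ _ h1 h3, hpsi0 _ _ h3 h4]
  let T : ℕ → ℤ := fun j => ∑ k ∈ Finset.range n, psi ((k : ℤ), (j : ℤ)) ((k : ℤ) + 1, (j : ℤ))
  have hT : ∀ j, T (j + 1) = T j := by
    intro j
    have h1 : T (j+1) - T j = ∑ k ∈ Finset.range n,
        ((fun k : ℕ => psi ((k : ℤ), (j:ℤ)) ((k : ℤ), (j:ℤ)+1)) (k+1)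
          - (fun k : ℕ => psi ((k : ℤ), (j:ℤ)) ((k : ℤ), (j:ℤ)+1)) k) := by
      simp only [T]
      rw [← Finset.sum_sub_distrib]
      refine Finset.sum_congr rfl fun k _ => ?_
      have := hclosed k j
      push_cast
      linarith
    rw [Finset.sum_range_sub (fun k : ℕ => psi ((k : ℤ), (j:ℤ)) ((k : ℤ), (j:ℤ)+1))] at h1
    have e1 := hpsi0 ((n : ℤ), (j:ℤ)) ((n : ℤ), (j:ℤ)+1) (hn _) (hn _)
    have e2 := hpsi0 ((0 : ℤ), (j:ℤ)) ((0 : ℤ), (j:ℤ)+1) (h0 _) (h0 _)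
    simp only [Nat.cast_zero] at h1
    linarith
  have hT0 : ∀ j, T j = T 0 := by
    intro j
    induction j with
    | zero => rfl
    | succ j ih => rw [hT, ih]
  obtain ⟨M, hM⟩ : ∃ M : ℕ, ∀ x : ℤ, (x, (M : ℤ)) ∉ B := by
    obtain ⟨M, hM⟩ := (hB.image (fun v : ZV => v.2.toNat)).bddAbove
    refine ⟨M + 1, fun x hx => ?_⟩
    have := hM ⟨_, hx, rfl⟩
    simp only at this
    omega
  have hTM : T M = 0 := Finset.sum_eq_zero fun k _ => hpsi0 _ _ (hM _) (hM _)
  have hTa : T 0 = a ((n : ℤ), 0) - a ((0 : ℤ), 0) := by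
    have : T 0 = ∑ k ∈ Finset.range n,
        ((fun k : ℕ => a ((k : ℤ), 0)) (k+1) - (fun k : ℕ => a ((k : ℤ), 0)) k) := by
      refine Finset.sum_congr rfl fun k hk => ?_
      have hk := Finset.mem_range.1 hk
      have := hpsi1 ((k : ℤ), 0) ((k : ℤ) + 1, 0) (by simp [adjZ])
        (fun h => ⟨h, Or.inl ⟨k, hk.le, rfl⟩⟩) (fun h => ⟨h, Or.inl ⟨k+1, hk, by simp⟩⟩)
      simpa using this
    rw [this, Finset.sum_range_sub (fun k : ℕ => a ((k : ℤ), 0))]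
    simp
  have e1 : a ((n : ℤ), 0) = 0 := by simp only [a, if_neg hcon]
  have e2 : a ((0 : ℤ), 0) = 1 := by simp only [a]; rw [if_pos (SimpleGraph.Reachable.refl _)]
  have := hT0 M
  omega

lemma adj_bond (a b : ZV) :
    ∃ c, bondOf a b = (a, c) ∨ bondOf a b = (b, c) := by
  unfold bondOf
  split_ifs <;> simp

lemma closedStep_of_good (ω : CfgZ) (a b : ZV) (h : adjZ a b) (ha : ¬ bad ω a) (hb : ¬ bad ω b) :
    closedStep ω a b := by
  refine ⟨h, ?_⟩
  obtain ⟨c, hc⟩ := adj_bond a b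
  simp only [bad, not_or, Bool.not_eq_true] at ha hb
  rcases hc with hc | hc <;> rw [hc] <;> cases c <;> simp [ha, hb]

lemma detour_good (ω : CfgZ) (n : ℕ) (v : ZV) (hv : v ∈ detour (badSet ω n) n) : ¬ bad ω v := by
  intro hb
  obtain ⟨hnot, ⟨k, hk, rfl⟩ | ⟨b, ⟨k, hk, hbk, hr⟩, hkb⟩⟩ := hv
  · exact hnot ⟨k, hk, hb, SimpleGraph.Reachable.refl _⟩
  · apply hnot
    refine ⟨k, hk, hbk, ?_⟩
    by_cases hbv : b = v
    · exact hbv ▸ hr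
    have hbb : bad ω b := by
      by_cases hkb' : ((k : ℤ), (0 : ℤ)) = b
      · exact hkb' ▸ hbk
      · obtain ⟨p⟩ := hr.symm
        cases p with
        | nil => exact hbk
        | cons h _ => exact h.2.2.1
    have : (badGraph ω).Adj b v := ⟨hbv, hkb, hbb, hb⟩
    exact hr.trans this.reachable

lemma detour_card (B : Set ZV) (n : ℕ) (hB : B.Finite) :
    ∃ F : Finset ZV, detour B n ⊆ F ∧ F.card ≤ n + 1 + 9 * hB.toFinset.card := by
  refine ⟨(Finset.range (n+1)).image (fun k : ℕ => ((k : ℤ), (0 : ℤ))) ∪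
    (hB.toFinset ×ˢ (Finset.Icc (-1 : ℤ) 1 ×ˢ Finset.Icc (-1 : ℤ) 1)).image
      (fun x => x.1 + x.2), ?_, ?_⟩
  · rintro v ⟨_, ⟨k, hk, rfl⟩ | ⟨b, hb, hkb⟩⟩
    · simp only [Finset.coe_union, Set.mem_union, Finset.mem_coe, Finset.mem_image]
      exact Or.inl ⟨k, by simpa using by omega, rfl⟩
    · simp only [Finset.coe_union, Set.mem_union, Finset.mem_coe, Finset.mem_image]
      refine Or.inr ⟨(b, v - b), ?_, by simp⟩
      obtain ⟨h1, h2⟩ := hkb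
      rw [abs_le] at h1 h2
      simp only [Finset.mem_product, Finset.mem_Icc, Set.Finite.mem_toFinset, Prod.fst_sub,
        Prod.snd_sub]
      exact ⟨hb, by omega, by omega⟩
  · refine (Finset.card_union_le _ _).trans (add_le_add ?_ ?_)
    · exact Finset.card_image_le.trans (by simp)
    · refine Finset.card_image_le.trans ?_
      simp [Finset.card_product, mul_comm]

lemma chemDist_le (ω : CfgZ) (n : ℕ) (hB : (badSet ω n).Finite)
    (h0 : ∀ j : ℤ, ((0 : ℤ), j) ∉ badSet ω n) (hn : ∀ j : ℤ, ((n : ℤ), j) ∉ badSet ω n) :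
    chemDist ω (0, 0) ((n : ℤ), 0) ≤ ((n + 9 * hB.toFinset.card : ℕ) : ℝ≥0∞) := by
  obtain ⟨p, hp⟩ := (detour_connected _ n hB h0 hn).exists_isPath
  obtain ⟨F, hF, hcard⟩ := detour_card _ n hB
  have hsupp : ∀ v ∈ p.support, v ∈ detour (badSet ω n) n := by
    intro v hv
    rcases eq_or_ne v ((0 : ℤ), 0) with rfl | hne
    · exact ⟨h0 _, Or.inl ⟨0, by simp, by simp⟩⟩
    · obtain ⟨q⟩ : (latGraph (detour (badSet ω n) n)).Reachable v ((0 : ℤ), 0) :=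
        (p.takeUntil v hv).reverse.reachable
      cases q with
      | nil => exact absurd rfl hne
      | cons h _ => exact h.2.1
  have hchain : p.support.IsChain (closedStep ω) := by
    refine p.isChain_adj_support.imp ?_
    intro a b hab
    exact closedStep_of_good ω a b hab.1 (detour_good ω n a hab.2.1) (detour_good ω n b hab.2.2)
  have hhead : p.support.head? = some ((0 : ℤ), (0 : ℤ)) := by
    rw [List.head?_eq_some_head p.support_ne_nil, p.head_support]
  have hlast : p.support.getLast? = some ((n : ℤ), (0 : ℤ)) := by
    rw [List.getLast?_eq_some_getLast p.support_ne_nil, p.getLast_support]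
  refine (iInf_le _ ⟨p.support, hchain, hhead, hlast⟩).trans ?_
  have : p.support.length ≤ F.card := by
    rw [← List.toFinset_card_of_nodup hp.support_nodup]
    refine Finset.card_le_card fun v hv => ?_
    exact hF (hsupp v (List.mem_toFinset.1 hv))
  exact_mod_cast (by omega : p.support.length - 1 ≤ n + 9 * hB.toFinset.card)

/-- King-paths with `m` steps starting at `v`, as vertex lists. -/
def paths : ℕ → ZV → Finset (List ZV)
  | 0, v => {[v]}
  | m + 1, v => (Finset.Icc (-1 : ℤ) 1 ×ˢ Finset.Icc (-1 : ℤ) 1).biUnion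
      fun d => (paths m (v + d)).image (fun l => v :: l)

lemma paths_card (m : ℕ) (v : ZV) : (paths m v).card ≤ 9 ^ m := by
  induction m generalizing v with
  | zero => simp [paths]
  | succ m ih =>
    rw [paths]
    refine (Finset.card_biUnion_le_card_mul _ _ (9 ^ m)
      (fun d _ => Finset.card_image_le.trans (ih _))).trans ?_
    simp [Finset.card_product, pow_succ, mul_comm]

lemma paths_length (m : ℕ) (v : ZV) (l : List ZV) (hl : l ∈ paths m v) : l.length = m + 1 := by
  induction m generalizing v l with
  | zero => simp [paths] at hl; simp [hl]
  | succ m ih =>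
    rw [paths] at hl
    simp only [Finset.mem_biUnion, Finset.mem_image] at hl
    obtain ⟨d, _, l', hl', rfl⟩ := hl
    simp [ih _ _ hl']

lemma paths_last (m : ℕ) (v w : ZV) (l : List ZV) (hl : l ∈ paths m v)
    (hw : l.getLast? = some w) : |v.1 - w.1| ≤ m := by
  induction m generalizing v l with
  | zero =>
    simp [paths] at hl
    subst hl
    simp at hw
    simp [hw]
  | succ m ih =>
    rw [paths] at hl
    simp only [Finset.mem_biUnion, Finset.mem_image, Finset.mem_product, Finset.mem_Icc] at hl
    obtain ⟨d, hd, l', hl', rfl⟩ := hl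
    have hne : l' ≠ [] := by
      intro h
      have := paths_length _ _ _ hl'
      simp [h] at this
    rw [List.getLast?_cons_of_ne_nil hne] at hw
    have := ih _ _ hl' hw
    rw [abs_le] at this ⊢
    simp only [Prod.fst_add] at this
    push_cast
    omega

lemma mem_paths (l : List ZV) (v : ZV) (h : List.IsChain king (v :: l)) :
    (v :: l) ∈ paths l.length v := by
  induction l generalizing v with
  | nil => simp [paths]
  | cons w l ih =>
    rw [List.isChain_cons_cons] at h
    simp only [List.length_cons, paths, Finset.mem_biUnion, Finset.mem_image, Finset.mem_product,
      Finset.mem_Icc]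
    obtain ⟨h1, h2⟩ := h.1
    rw [abs_le] at h1 h2
    refine ⟨w - v, ?_, w :: l, ?_, rfl⟩
    · simp only [Prod.fst_sub, Prod.snd_sub]; omega
    · rw [add_sub_cancel]; exact ih w h.2

/-- All vertices of the list are bad. -/
def badAll (l : List ZV) : Set CfgZ := {ω | ∀ v ∈ l, bad ω v}

lemma badAll_measurable (l : List ZV) : MeasurableSet (badAll l) := by
  have hv : ∀ v, MeasurableSet {ω : CfgZ | bad ω v} := by
    intro v
    have h : ∀ e : Bond, MeasurableSet {ω : CfgZ | ω e = true} := fun e =>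
      (measurable_pi_apply (X := fun _ : Bond => Bool) e) (measurableSet_singleton true)
    exact (h (v, true)).union (h (v, false))
  have : badAll l = ⋂ v ∈ l.toFinset, {ω : CfgZ | bad ω v} := by
    ext ω; simp [badAll]
  rw [this]
  exact Finset.measurableSet_biInter _ fun v _ => hv v

/-- Nodup paths. -/
def npaths (m : ℕ) (v : ZV) : Finset (List ZV) := (paths m v).filter (fun l => l.Nodup)

lemma exists_path (ω : CfgZ) (n : ℕ) (w : ZV) (hw : w ∈ badSet ω n) :
    ∃ k : ℕ, k ≤ n ∧ ∃ m : ℕ, ∃ l ∈ npaths m ((k : ℤ), 0), ω ∈ badAll l ∧ l.getLast? = some w := by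
  obtain ⟨k, hk, hb, hr⟩ := hw
  obtain ⟨p, hp⟩ := hr.exists_isPath
  have hchain : p.support.IsChain king := p.isChain_adj_support.imp fun a b h => h.2.1
  obtain ⟨l, hl⟩ : ∃ l, p.support = ((k : ℤ), (0 : ℤ)) :: l := ⟨_, p.support_eq_cons⟩
  refine ⟨k, hk, l.length, p.support, ?_, ?_, ?_⟩
  · refine Finset.mem_filter.2 ⟨?_, hp.support_nodup⟩
    rw [hl]
    exact mem_paths _ _ (hl ▸ hchain)
  · intro v hv
    obtain ⟨q⟩ : (badGraph ω).Reachable v ((k : ℤ), 0) := (p.takeUntil v hv).reverse.reachable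
    cases q with
    | nil => exact hb
    | cons h _ => exact h.2.2.1
  · rw [List.getLast?_eq_some_getLast p.support_ne_nil, p.getLast_support]

/-- Number of bad paths. -/
def cnt (m : ℕ) (v : ZV) (ω : CfgZ) : ℝ≥0∞ :=
  ∑ l ∈ npaths m v, (badAll l).indicator (fun _ => 1) ω

/-- Total number of bad paths started on the segment. -/
def total (n : ℕ) (ω : CfgZ) : ℝ≥0∞ :=
  ∑ k ∈ Finset.range (n + 1), ∑' m, cnt m ((k : ℤ), 0) ω

lemma cnt_measurable (m : ℕ) (v : ZV) : Measurable (cnt m v) := by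
  unfold cnt
  exact Finset.measurable_fun_sum _ fun l _ => measurable_const.indicator (badAll_measurable l)

lemma total_measurable (n : ℕ) : Measurable (total n) := by
  unfold total
  exact Finset.measurable_fun_sum _ fun k _ => Measurable.ennreal_tsum fun m => cnt_measurable _ _

lemma badSet_count (ω : CfgZ) (n : ℕ) : Measure.count (badSet ω n) ≤ total n ω := by
  let G : ℕ → ℕ → Finset ZV := fun k m =>
    ((npaths m ((k : ℤ), 0)).filter (fun l => ω ∈ badAll l)).image (fun l => l.getLast?.getD 0)
  have hsub : badSet ω n ⊆ ⋃ k ∈ Finset.range (n + 1), ⋃ m, (G k m : Set ZV) := by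
    intro w hw
    obtain ⟨k, hk, m, l, hl, hb, hlast⟩ := exists_path ω n w hw
    simp only [Set.mem_iUnion]
    refine ⟨k, Finset.mem_range.2 (by omega), m, ?_⟩
    simp only [G, Finset.mem_coe, Finset.mem_image, Finset.mem_filter]
    exact ⟨l, ⟨hl, hb⟩, by simp [hlast]⟩
  refine (measure_mono hsub).trans ?_
  refine (measure_biUnion_finset_le _ _).trans (Finset.sum_le_sum fun k _ => ?_)
  refine (measure_iUnion_le _).trans (ENNReal.tsum_le_tsum fun m => ?_)
  rw [Measure.count_apply_finset]
  refine (Nat.cast_le.2 Finset.card_image_le).trans ?_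
  rw [Finset.card_filter, cnt, Nat.cast_sum]
  refine Finset.sum_le_sum fun l _ => ?_
  by_cases h : ω ∈ badAll l <;> simp [h]

lemma badAll_le (P : ℝ → Measure CfgZ) (hP : IsBernoulliBondFamily P) (p : ℝ) (hp0 : 0 ≤ p)
    (hp1 : p ≤ 1) (l : List ZV) (hl : l.Nodup) :
    P p (badAll l) ≤ (2 * ENNReal.ofReal p) ^ l.length := by
  obtain ⟨_, hF⟩ := hP p hp0 hp1
  let E : Finset ZV → Finset Bond := fun T => l.toFinset.image (fun v => (v, decide (v ∈ T)))
  have hsub : badAll l ⊆ ⋃ T ∈ l.toFinset.powerset,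
      {ω : CfgZ | ∀ e ∈ E T, ω e = (fun _ => true) e} := by
    intro ω hω
    simp only [Set.mem_iUnion]
    refine ⟨l.toFinset.filter (fun v => ω (v, true) = true),
      Finset.mem_powerset.2 (Finset.filter_subset _ _), ?_⟩
    intro e he
    obtain ⟨v, hv, rfl⟩ := Finset.mem_image.1 he
    have hb := hω v (List.mem_toFinset.1 hv)
    by_cases h : ω (v, true) = true
    · have : v ∈ l.toFinset.filter (fun v => ω (v, true) = true) := Finset.mem_filter.2 ⟨hv, h⟩
      simp only [this, decide_true, h]
    · have : v ∉ l.toFinset.filter (fun v => ω (v, true) = true) :=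
        fun h' => h (Finset.mem_filter.1 h').2
      simp only [this, decide_false]
      exact hb.resolve_left h
  have hcard : ∀ T, (E T).card = l.length := by
    intro T
    rw [← List.toFinset_card_of_nodup hl]
    exact Finset.card_image_of_injective _ fun a b h => (Prod.ext_iff.1 h).1
  refine (measure_mono hsub).trans ((measure_biUnion_finset_le _ _).trans ?_)
  have : ∀ T ∈ l.toFinset.powerset, P p {ω : CfgZ | ∀ e ∈ E T, ω e = (fun _ => true) e}
      = ENNReal.ofReal p ^ l.length := by
    intro T _
    rw [hF (E T) (fun _ => true)]
    simp [hcard]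
  rw [Finset.sum_congr rfl this, Finset.sum_const, Finset.card_powerset,
    List.toFinset_card_of_nodup hl, mul_pow, nsmul_eq_mul]
  simp

lemma npaths_sum_le (P : ℝ → Measure CfgZ) (hP : IsBernoulliBondFamily P) (p : ℝ) (hp0 : 0 ≤ p)
    (hp1 : p ≤ 1) (m : ℕ) (v : ZV) :
    ∑ l ∈ npaths m v, P p (badAll l) ≤ (ENNReal.ofReal (18 * p)) ^ (m + 1) := by
  have h1 : ∀ l ∈ npaths m v, P p (badAll l) ≤ (2 * ENNReal.ofReal p) ^ (m + 1) := by
    intro l hl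
    obtain ⟨hl1, hl2⟩ := Finset.mem_filter.1 hl
    rw [← paths_length m v l hl1]
    exact badAll_le P hP p hp0 hp1 l hl2
  have h2 : (npaths m v).card ≤ 9 ^ (m + 1) :=
    (Finset.card_filter_le _ _).trans ((paths_card m v).trans
      (Nat.pow_le_pow_right (by norm_num) (by omega)))
  have h3 : ENNReal.ofReal (18 * p) = 9 * (2 * ENNReal.ofReal p) := by
    rw [ENNReal.ofReal_mul (by norm_num), ← mul_assoc]
    norm_num
  refine (Finset.sum_le_card_nsmul _ _ _ h1).trans ?_
  rw [nsmul_eq_mul, h3, mul_pow 9]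
  gcongr
  exact_mod_cast h2

lemma geom_le (q : ℝ≥0∞) (hq : q ≤ 2⁻¹) : (1 - q)⁻¹ ≤ 2 := by
  rw [ENNReal.inv_le_iff_inv_le]
  rw [← ENNReal.one_sub_inv_two]
  exact tsub_le_tsub_left hq 1

lemma total_lintegral (P : ℝ → Measure CfgZ) (hP : IsBernoulliBondFamily P) (p : ℝ) (hp0 : 0 ≤ p)
    (hp1 : p ≤ 1) (hq : ENNReal.ofReal (18 * p) ≤ 2⁻¹) (n : ℕ) :
    ∫⁻ ω, total n ω ∂(P p) ≤ (n + 1) * (ENNReal.ofReal (18 * p) * 2) := by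
  unfold total
  rw [lintegral_finsetSum _ (fun k _ => Measurable.ennreal_tsum fun m => cnt_measurable _ _)]
  have : ∀ k ∈ Finset.range (n + 1), ∫⁻ ω, ∑' m, cnt m ((k : ℤ), 0) ω ∂(P p)
      ≤ ENNReal.ofReal (18 * p) * 2 := by
    intro k _
    rw [lintegral_tsum (fun m => (cnt_measurable _ _).aemeasurable)]
    have h : ∀ m, ∫⁻ ω, cnt m ((k : ℤ), 0) ω ∂(P p) ≤ ENNReal.ofReal (18 * p) ^ (m + 1) := by
      intro m
      unfold cnt
      rw [lintegral_finsetSum _ (fun l _ => measurable_const.indicator (badAll_measurable l))]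
      refine le_trans (le_of_eq (Finset.sum_congr rfl fun l _ => ?_))
        (npaths_sum_le P hP p hp0 hp1 m ((k : ℤ), 0))
      rw [lintegral_indicator (badAll_measurable l)]
      simp
    refine (ENNReal.tsum_le_tsum h).trans ?_
    rw [ENNReal.tsum_geometric_add_one]
    gcongr
    exact geom_le _ hq
  refine (Finset.sum_le_card_nsmul _ _ _ this).trans ?_
  simp

/-- Some long bad path from `s j`, of at least `j` steps. -/
def longEvent (s : ℕ → ZV) : Set CfgZ :=
  ⋃ j : ℕ, ⋃ i : ℕ, ⋃ l ∈ npaths (j + i) (s j), badAll l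

lemma longEvent_le (P : ℝ → Measure CfgZ) (hP : IsBernoulliBondFamily P) (p : ℝ) (hp0 : 0 ≤ p)
    (hp1 : p ≤ 1) (hq : ENNReal.ofReal (18 * p) ≤ 2⁻¹) (s : ℕ → ZV) :
    P p (longEvent s) ≤ ENNReal.ofReal (18 * p) * 4 := by
  set q := ENNReal.ofReal (18 * p) with hqdef
  have h : P p (longEvent s) ≤ ∑' j : ℕ, ∑' i : ℕ, q ^ (j + i + 1) := by
    refine (measure_iUnion_le _).trans (ENNReal.tsum_le_tsum fun j => ?_)
    refine (measure_iUnion_le _).trans (ENNReal.tsum_le_tsum fun i => ?_)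
    exact (measure_biUnion_finset_le _ _).trans (npaths_sum_le P hP p hp0 hp1 _ _)
  refine h.trans ?_
  have h2 : ∀ j : ℕ, ∑' i : ℕ, q ^ (j + i + 1) ≤ q ^ j * (q * 2) := by
    intro j
    have : ∀ i : ℕ, q ^ (j + i + 1) = q ^ j * q ^ (i + 1) := fun i => by rw [add_assoc, pow_add]
    simp only [this]
    rw [ENNReal.tsum_mul_left, ENNReal.tsum_geometric_add_one]
    gcongr
    exact geom_le _ hq
  refine (ENNReal.tsum_le_tsum h2).trans ?_
  rw [ENNReal.tsum_mul_right, ENNReal.tsum_geometric]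
  calc (1 - q)⁻¹ * (q * 2) ≤ 2 * (q * 2) := by gcongr; exact geom_le _ hq
    _ = q * 4 := by ring

lemma notMem_zero (ω : CfgZ) (n : ℕ) (h : ω ∉ longEvent (fun j => ((j : ℤ), 0))) (j : ℤ) :
    ((0 : ℤ), j) ∉ badSet ω n := by
  intro hw
  obtain ⟨k, hk, m, l, hl, hb, hlast⟩ := exists_path ω n _ hw
  have h1 := paths_last m _ _ l (Finset.mem_filter.1 hl).1 hlast
  rw [abs_le] at h1
  simp only at h1
  obtain ⟨i, rfl⟩ : ∃ i, m = k + i := ⟨m - k, by omega⟩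
  apply h
  simp only [longEvent, Set.mem_iUnion]
  exact ⟨k, i, l, hl, hb⟩

lemma notMem_n (ω : CfgZ) (n : ℕ) (h : ω ∉ longEvent (fun j => ((n : ℤ) - j, 0))) (j : ℤ) :
    ((n : ℤ), j) ∉ badSet ω n := by
  intro hw
  obtain ⟨k, hk, m, l, hl, hb, hlast⟩ := exists_path ω n _ hw
  have h1 := paths_last m _ _ l (Finset.mem_filter.1 hl).1 hlast
  rw [abs_le] at h1
  simp only at h1
  obtain ⟨i, rfl⟩ : ∃ i, m = (n - k) + i := ⟨m - (n - k), by omega⟩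
  apply h
  simp only [longEvent, Set.mem_iUnion]
  refine ⟨n - k, i, l, ?_, hb⟩
  have : (n : ℤ) - ((n - k : ℕ) : ℤ) = k := by omega
  rw [this]
  exact hl

lemma event_sub (ω : CfgZ) (n : ℕ) (ε : ℝ) (hε : 0 < ε)
    (h0 : ω ∉ longEvent (fun j => ((j : ℤ), 0)))
    (hn : ω ∉ longEvent (fun j => ((n : ℤ) - j, 0)))
    (ht : 9 * total n ω < ENNReal.ofReal (ε * n)) :
    chemDist ω (0, 0) ((n : ℤ), 0) ≤ ENNReal.ofReal ((1 + ε) * (n : ℝ)) := by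
  have hc := badSet_count ω n
  have hlt : total n ω < ∞ := by
    by_contra hcon
    have : total n ω = ∞ := by simpa using hcon
    rw [this] at ht
    simp at ht
  have hB : (badSet ω n).Finite := Measure.count_apply_lt_top.1 (hc.trans_lt hlt)
  refine (chemDist_le ω n hB (notMem_zero ω n h0) (notMem_n ω n hn)).trans ?_
  rw [Measure.count_apply_finite _ hB] at hc
  rw [add_mul, one_mul, ENNReal.ofReal_add (by positivity) (by positivity), ENNReal.ofReal_natCast]
  push_cast
  gcongr
  exact (mul_le_mul_right hc 9).trans ht.le

/-- For any `ε > 0` there exists `p₀ = p₀(ε) ∈ (0,1/2)` such that for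
all `p ∈ [0,p₀]` and all sufficiently large `n` (depending on `ε`):
`P[D(0,(n,0)) ≤ (1+ε)n] ≥ 1 − ε`. -/
theorem chemical_distance_close_to_euclidean
    (P : ℝ → Measure CfgZ) (hP : IsBernoulliBondFamily P) :
    ∀ ε : ℝ, 0 < ε → ∃ p₀ : ℝ, 0 < p₀ ∧ p₀ < 1 / 2 ∧ ∃ N : ℕ,
      ∀ p : ℝ, 0 ≤ p → p ≤ p₀ → ∀ n : ℕ, N ≤ n →
        ENNReal.ofReal (1 - ε) ≤
          P p {ω : CfgZ | chemDist ω (0, 0) ((n : ℤ), 0)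
                ≤ ENNReal.ofReal ((1 + ε) * (n : ℝ))} := by

  intro ε hε
  set q₀ : ℝ := min (1 / 4) (min (ε ^ 2 / 100) (ε / 100)) with hq₀
  have hq0 : 0 < q₀ := by positivity
  have hqa : q₀ ≤ 1 / 4 := min_le_left _ _
  have hqb : q₀ ≤ ε ^ 2 / 100 := (min_le_right _ _).trans (min_le_left _ _)
  have hqc : q₀ ≤ ε / 100 := (min_le_right _ _).trans (min_le_right _ _)
  refine ⟨q₀ / 18, by positivity, by linarith, 1, ?_⟩
  intro p hp0 hp n hn
  have hp1 : p ≤ 1 := by linarith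
  have hq18 : 18 * p ≤ q₀ := by linarith
  have hq : ENNReal.ofReal (18 * p) ≤ 2⁻¹ := by
    rw [← ENNReal.ofReal_ofNat 2, ← ENNReal.ofReal_inv_of_pos (by norm_num)]
    exact ENNReal.ofReal_le_ofReal (by linarith)
  have hprob := (hP p hp0 hp1).1
  have hn1 : (1 : ℝ) ≤ n := by exact_mod_cast hn
  set A : Set CfgZ := {ω : CfgZ | chemDist ω (0, 0) ((n : ℤ), 0)
                ≤ ENNReal.ofReal ((1 + ε) * (n : ℝ))} with hA
  set L0 := longEvent (fun j => ((j : ℤ), 0))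
  set L1 := longEvent (fun j => ((n : ℤ) - j, 0))
  set B : Set CfgZ := {ω | ENNReal.ofReal (ε * n / 9) ≤ total n ω} with hB
  have hcover : (Set.univ : Set CfgZ) ⊆ A ∪ (L0 ∪ (L1 ∪ B)) := by
    intro ω _
    by_contra hcon
    simp only [Set.mem_union, not_or] at hcon
    obtain ⟨hA', h0, h1, hB'⟩ := hcon
    apply hA'
    refine event_sub ω n ε hε h0 h1 ?_
    have hB' : total n ω < ENNReal.ofReal (ε * n / 9) := not_le.1 hB'
    have h9 : ENNReal.ofReal (ε * n) = 9 * ENNReal.ofReal (ε * n / 9) := by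
      rw [← ENNReal.ofReal_ofNat 9, ← ENNReal.ofReal_mul (by norm_num)]
      congr 1
      norm_num
      ring
    rw [h9]
    exact (ENNReal.mul_lt_mul_iff_right (by norm_num) (by norm_num)).2 hB'
  have hBm : P p B ≤ ENNReal.ofReal (36 * ε / 100) := by
    have hpos : 0 < ε * n / 9 := by positivity
    have hm := mul_meas_ge_le_lintegral₀ (μ := P p) (total_measurable n).aemeasurable
      (ENNReal.ofReal (ε * n / 9))
    have hi := hm.trans (total_lintegral P hP p hp0 hp1 hq n)
    have hr : ((n : ℝ≥0∞) + 1) * (ENNReal.ofReal (18 * p) * 2)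
        ≤ ENNReal.ofReal (ε * n / 9) * ENNReal.ofReal (36 * ε / 100) := by
      rw [← ENNReal.ofReal_mul hpos.le, ← ENNReal.ofReal_ofNat 2,
        ← ENNReal.ofReal_mul (by positivity), ← ENNReal.ofReal_natCast n, ← ENNReal.ofReal_one,
        ← ENNReal.ofReal_add (by positivity) (by positivity), ← ENNReal.ofReal_mul (by positivity)]
      refine ENNReal.ofReal_le_ofReal ?_
      have h1 : 18 * p * 2 ≤ ε ^ 2 / 50 := by linarith
      have h2 : ((n : ℝ) + 1) ≤ 2 * n := by linarith
      calc ((n : ℝ) + 1) * (18 * p * 2) ≤ (2 * n) * (ε ^ 2 / 50) := by gcongr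
        _ = ε * n / 9 * (36 * ε / 100) := by ring
    have := hi.trans hr
    exact (ENNReal.mul_le_mul_iff_right (by simpa using hpos)
      ENNReal.ofReal_ne_top).1 this
  have hL : ∀ s, P p (longEvent s) ≤ ENNReal.ofReal (4 * ε / 100) := by
    intro s
    refine (longEvent_le P hP p hp0 hp1 hq s).trans ?_
    rw [← ENNReal.ofReal_ofNat 4, ← ENNReal.ofReal_mul (by positivity)]
    exact ENNReal.ofReal_le_ofReal (by linarith)
  have h1 : (1 : ℝ≥0∞) ≤ P p A + ENNReal.ofReal ε := by
    calc (1 : ℝ≥0∞) = P p Set.univ := measure_univ.symm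
      _ ≤ P p (A ∪ (L0 ∪ (L1 ∪ B))) := measure_mono hcover
      _ ≤ P p A + (P p L0 + (P p L1 + P p B)) := by
        refine (measure_union_le _ _).trans ?_
        gcongr
        refine (measure_union_le _ _).trans ?_
        gcongr
        exact measure_union_le _ _
      _ ≤ P p A + (ENNReal.ofReal (4 * ε / 100) + (ENNReal.ofReal (4 * ε / 100)
          + ENNReal.ofReal (36 * ε / 100))) := by
        gcongr
        · exact hL _
        · exact hL _
      _ ≤ P p A + ENNReal.ofReal ε := by
        gcongr
        rw [← ENNReal.ofReal_add (by positivity) (by positivity),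
          ← ENNReal.ofReal_add (by positivity) (by positivity)]
        exact ENNReal.ofReal_le_ofReal (by linarith)
  rw [ENNReal.ofReal_sub _ hε.le, ENNReal.ofReal_one]
  exact tsub_le_iff_right.2 h1

end Z2BondPercolation
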